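/- Let φ : R → S be a faithfully flat homomorphism of commutative noetherian rings and assume R is semi-local (R has only finitely many maximal ideals). For every R-module M there are equalities Gfd_S(S ⊗_R M) = Gfd_R(S ⊗_R M) = Gfd_R(M), where in the middle term S ⊗_R M is regarded as an R-module via φ. -/

import Mathlib

/-!
Let `φ : R → S` be a faithfully flat homomorphism of commutative noetherian rings and
assume `R` is semi-local (finitely many maximal ideals). For every `R`-module `M` one has
`Gfd_S(S ⊗_R M) = Gfd_R(S ⊗_R M) = Gfd_R M`, where in the middle term `S ⊗_R M` is
regarded as an `R`-module.
-/

universe u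

open CategoryTheory TensorProduct

/-- A witness that `G` is a Gorenstein flat `R`-module: an exact complex `F` of flat
`R`-modules (with differentials `d i : F (i+1) →ₗ[R] F i`) such that `E ⊗_R F` is exact
for every injective `R`-module `E`, together with an isomorphism `G ≅ im (F 0 → F (-1))`. -/
structure GorensteinFlatWitness (R : Type u) [CommRing R]
    (G : Type u) [AddCommGroup G] [Module R G] : Type (u + 1) where
  F : ℤ → Type u
  [acg : ∀ i, AddCommGroup (F i)]
  [mod : ∀ i, Module R (F i)]
  flat : ∀ i, Module.Flat R (F i)
  d : ∀ i : ℤ, F (i + 1) →ₗ[R] F i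
  d_comp_d : ∀ i : ℤ, (d i).comp (d (i + 1)) = 0
  exact : ∀ i : ℤ, LinearMap.ker (d i) = LinearMap.range (d (i + 1))
  tensor_exact : ∀ (E : Type u) [AddCommGroup E] [Module R E], Module.Injective R E →
    ∀ i : ℤ, LinearMap.ker (LinearMap.lTensor E (d i)) =
      LinearMap.range (LinearMap.lTensor E (d (i + 1)))
  im_iso : Nonempty (G ≃ₗ[R] LinearMap.range (d (-1)))

/-- `G` is a Gorenstein flat `R`-module. -/
def IsGorensteinFlat (R : Type u) [CommRing R]
    (G : Type u) [AddCommGroup G] [Module R G] : Prop :=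
  Nonempty (GorensteinFlatWitness R G)

/-- A witness for an exact sequence `0 → Gₙ → ⋯ → G₁ → G₀ → M → 0` with each `Gᵢ`
Gorenstein flat (modules beyond index `n` are trivial, which encodes that the
sequence stops at `Gₙ`). -/
structure GfdWitness (R : Type u) [CommRing R]
    (M : Type u) [AddCommGroup M] [Module R M] (n : ℕ) : Type (u + 1) where
  G : ℕ → Type u
  [acg : ∀ i, AddCommGroup (G i)]
  [mod : ∀ i, Module R (G i)]
  gf : ∀ i ≤ n, IsGorensteinFlat R (G i)
  triv : ∀ i, n < i → Subsingleton (G i)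
  π : G 0 →ₗ[R] M
  π_surj : Function.Surjective π
  d : ∀ i : ℕ, G (i + 1) →ₗ[R] G i
  exact_zero : LinearMap.ker π = LinearMap.range (d 0)
  exact : ∀ i : ℕ, LinearMap.ker (d i) = LinearMap.range (d (i + 1))

/-- The Gorenstein flat dimension of a module: the least `n` admitting an exact
sequence `0 → Gₙ → ⋯ → G₀ → M → 0` of Gorenstein flat modules, as an element
of `ℕ∞` (`⊤` if there is no such `n`). -/
noncomputable def gfd (R : Type u) [CommRing R]
    (M : Type u) [AddCommGroup M] [Module R M] : ℕ∞ :=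
  sInf {c : ℕ∞ | ∃ n : ℕ, c = n ∧ Nonempty (GfdWitness R M n)}

namespace GFD

section Basics

variable {R : Type u} [CommRing R]
variable {A B C D : Type u} [AddCommGroup A] [Module R A] [AddCommGroup B] [Module R B]
  [AddCommGroup C] [Module R C] [AddCommGroup D] [Module R D]

/-- `f` is pure with respect to duals of injective modules: every map from the source to
the character module of an injective module extends along `f`. -/
def PureD (f : A →ₗ[R] B) : Prop :=
  ∀ (E : Type u) [AddCommGroup E] [Module R E], Module.Injective R E →
    ∀ φ : A →ₗ[R] CharacterModule E, ∃ ψ : B →ₗ[R] CharacterModule E, ψ ∘ₗ f = φ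

/-- Short exact sequences. -/
structure SES (f : A →ₗ[R] B) (g : B →ₗ[R] C) : Prop where
  inj : Function.Injective f
  ex : Function.Exact f g
  surj : Function.Surjective g

theorem SES.zero {f : A →ₗ[R] B} {g : B →ₗ[R] C} (h : SES f g) (a : A) : g (f a) = 0 :=
  h.ex.apply_apply_eq_zero a

theorem SES.lift {f : A →ₗ[R] B} {g : B →ₗ[R] C} (h : SES f g) (b : B) (hb : g b = 0) :
    ∃ a, f a = b := (h.ex b).1 hb

theorem exists_desc {R B C D : Type*} [CommRing R] [AddCommGroup B] [Module R B]
    [AddCommGroup C] [Module R C] [AddCommGroup D] [Module R D]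
    {g : B →ₗ[R] C} (hg : Function.Surjective g) (φ : B →ₗ[R] D)
    (h : ∀ b, g b = 0 → φ b = 0) : ∃ χ : C →ₗ[R] D, ∀ b, χ (g b) = φ b := by
  refine ⟨(LinearMap.ker g).liftQ φ (fun b hb => h b hb) ∘ₗ
    (g.quotKerEquivOfSurjective hg).symm.toLinearMap, fun b => ?_⟩
  have : (g.quotKerEquivOfSurjective hg).symm (g b) = (LinearMap.ker g).mkQ b := by
    rw [LinearEquiv.symm_apply_eq]; simp
  rw [LinearMap.comp_apply, LinearEquiv.coe_coe, this]
  exact Submodule.liftQ_apply _ _ _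

theorem exists_desc_char {g : B →ₗ[R] C} (hg : Function.Surjective g)
    (φ : CharacterModule B) (h : ∀ b, g b = 0 → φ b = 0) :
    ∃ χ : CharacterModule C, ∀ b, χ (g b) = φ b := by
  obtain ⟨χ, hχ⟩ := exists_desc (R := ℤ) (g := g.toAddMonoidHom.toIntLinearMap) hg
    (AddMonoidHom.toIntLinearMap φ) h
  exact ⟨χ.toAddMonoidHom, hχ⟩

theorem SES.desc {f : A →ₗ[R] B} {g : B →ₗ[R] C} (h : SES f g) (φ : B →ₗ[R] D)
    (h0 : ∀ a, φ (f a) = 0) : ∃ χ : C →ₗ[R] D, ∀ b, χ (g b) = φ b := by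
  apply exists_desc h.surj
  intro b hb
  obtain ⟨a, rfl⟩ := h.lift b hb
  exact h0 a

theorem SES.ker {g : B →ₗ[R] C} (hg : Function.Surjective g) :
    SES (LinearMap.ker g).subtype g :=
  ⟨Subtype.val_injective, by rw [LinearMap.exact_iff]; simp, hg⟩

theorem SES.coker {f : A →ₗ[R] B} (hf : Function.Injective f) :
    SES f (LinearMap.range f).mkQ :=
  ⟨hf, by rw [LinearMap.exact_iff]; simp, Submodule.mkQ_surjective _⟩

theorem pureD_iff {f : A →ₗ[R] B} : PureD f ↔
    ∀ (E : Type u) [AddCommGroup E] [Module R E], Module.Injective R E →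
      Function.Injective (f.rTensor E) := by
  simp only [rTensor_injective_iff_lcomp_surjective]
  rfl

theorem pureD_iff' {f : A →ₗ[R] B} : PureD f ↔
    ∀ (E : Type u) [AddCommGroup E] [Module R E], Module.Injective R E →
      Function.Injective (f.lTensor E) := by
  simp only [pureD_iff, LinearMap.lTensor_inj_iff_rTensor_inj]

theorem PureD.comp {f : A →ₗ[R] B} {g : B →ₗ[R] C} (hf : PureD f) (hg : PureD g) :
    PureD (g ∘ₗ f) := by
  intro E _ _ hE φ
  obtain ⟨ψ, hψ⟩ := hf E hE φ
  obtain ⟨χ, hχ⟩ := hg E hE ψ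
  exact ⟨χ, by rw [← LinearMap.comp_assoc, hχ, hψ]⟩

/-- evaluation into the double dual -/
noncomputable def ev (R : Type u) [CommRing R] (A : Type u) [AddCommGroup A] [Module R A] :
    A →ₗ[R] CharacterModule (CharacterModule A) where
  toFun a := AddMonoidHom.eval a
  map_add' a b := by
    apply CharacterModule.ext; intro c; exact map_add c a b
  map_smul' r a := by
    apply CharacterModule.ext; intro c; rfl

theorem ev_apply (a : A) (c : CharacterModule A) : ev R A a c = c a := rfl

theorem ev_injective : Function.Injective (ev R A) := by
  rw [injective_iff_map_eq_zero]
  intro a ha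
  apply CharacterModule.eq_zero_of_character_apply
  intro c
  rw [← ev_apply (R := R), ha]; rfl

theorem dual_ev (c : CharacterModule A) :
    CharacterModule.dual (ev R A) (ev R (CharacterModule A) c) = c := by
  apply CharacterModule.ext; intro a; rfl

theorem dual_app (f : A →ₗ[R] B) (c : CharacterModule B) (a : A) :
    CharacterModule.dual f c a = c (f a) := rfl

/-- swap the arguments of a map into a dual -/
noncomputable def flip (φ : A →ₗ[R] CharacterModule B) : B →ₗ[R] CharacterModule A :=
  CharacterModule.dual φ ∘ₗ ev R B

theorem flip_apply (φ : A →ₗ[R] CharacterModule B) (b : B) (a : A) : flip φ b a = φ a b := rfl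

/-- If `dual f` has a section, then `f` is pure. -/
theorem pureD_of_dual_section {f : A →ₗ[R] B} (σ : CharacterModule A →ₗ[R] CharacterModule B)
    (h : ∀ c, CharacterModule.dual f (σ c) = c) : PureD f := by
  intro E _ _ _ φ
  refine ⟨flip (σ ∘ₗ flip φ), ?_⟩
  ext a e
  change σ (flip φ e) (f a) = φ a e
  rw [← dual_app, h]; rfl

theorem pureD_ev : PureD (ev R A) :=
  pureD_of_dual_section (ev R (CharacterModule A)) dual_ev

theorem injective_of_retract (hB : Module.Injective R B) (i : A →ₗ[R] B) (r : B →ₗ[R] A)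
    (h : ∀ a, r (i a) = a) : Module.Injective R A := by
  refine ⟨fun X Y _ _ _ _ f hf g => ?_⟩
  obtain ⟨k, hk⟩ := hB.out f hf (i ∘ₗ g)
  exact ⟨r ∘ₗ k, fun x => by simp [hk, h]⟩

theorem flat_iff : Module.Flat R A ↔ Module.Injective R (CharacterModule A) :=
  Module.Flat.iff_characterModule_injective

theorem SES.dual {f : A →ₗ[R] B} {g : B →ₗ[R] C} (h : SES f g) :
    SES (CharacterModule.dual g) (CharacterModule.dual f) := by
  refine ⟨CharacterModule.dual_injective_of_surjective g h.surj, ?_,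
    CharacterModule.dual_surjective_of_injective f h.inj⟩
  intro c
  constructor
  · intro hc
    have h1 : ∀ b, g b = 0 → c b = 0 := by
      intro b hb
      obtain ⟨a, rfl⟩ := h.lift b hb
      exact DFunLike.congr_fun hc a
    obtain ⟨χ, hχ⟩ := exists_desc_char h.surj c h1
    exact ⟨χ, DFunLike.ext _ _ hχ⟩
  · rintro ⟨d, rfl⟩
    apply CharacterModule.ext
    intro a
    change d (g (f a)) = 0
    rw [h.zero]; exact map_zero d

/-- A section on the right gives a retraction on the left. -/
theorem SES.retraction {f : A →ₗ[R] B} {g : B →ₗ[R] C} (h : SES f g) (s : C →ₗ[R] B)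
    (hs : ∀ c, g (s c) = c) : ∃ r : B →ₗ[R] A, ∀ a, r (f a) = a := by
  let e := LinearEquiv.ofInjective f h.inj
  have hm : ∀ b, (LinearMap.id - s ∘ₗ g : B →ₗ[R] B) b ∈ LinearMap.range f := by
    intro b
    obtain ⟨a, ha⟩ := h.lift (b - s (g b)) (by simp [hs])
    exact ⟨a, by simpa using ha⟩
  refine ⟨e.symm.toLinearMap ∘ₗ LinearMap.codRestrict _ (LinearMap.id - s ∘ₗ g) hm, fun a => ?_⟩
  simp only [LinearMap.comp_apply, LinearEquiv.coe_coe, LinearEquiv.symm_apply_eq]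
  ext
  simp [h.zero, e]

/-- A retraction on the left gives a section on the right. -/
theorem SES.splitting {f : A →ₗ[R] B} {g : B →ₗ[R] C} (h : SES f g) (r : B →ₗ[R] A)
    (hr : ∀ a, r (f a) = a) : ∃ s : C →ₗ[R] B, ∀ c, g (s c) = c := by
  obtain ⟨s, hs⟩ := h.desc (LinearMap.id - f ∘ₗ r) (by simp [hr])
  refine ⟨s, fun c => ?_⟩
  obtain ⟨b, rfl⟩ := h.surj c
  rw [hs]; simp [h.zero]

theorem SES.flat_coker {f : A →ₗ[R] B} {g : B →ₗ[R] C} (h : SES f g) (hB : Module.Flat R B)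
    (s : CharacterModule A →ₗ[R] CharacterModule B)
    (hs : ∀ c, CharacterModule.dual f (s c) = c) : Module.Flat R C := by
  rw [flat_iff] at hB ⊢
  obtain ⟨r, hr⟩ := h.dual.retraction s hs
  exact injective_of_retract hB _ r hr

theorem SES.flat_ker {f : A →ₗ[R] B} {g : B →ₗ[R] C} (h : SES f g) (hB : Module.Flat R B)
    (hC : Module.Flat R C) : PureD f ∧ Module.Flat R A := by
  rw [flat_iff] at hB hC ⊢
  obtain ⟨r, hr⟩ := hC.out _ h.dual.inj LinearMap.id
  obtain ⟨s, hs⟩ := h.dual.splitting r hr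
  exact ⟨pureD_of_dual_section s hs, injective_of_retract hB s _ hs⟩

theorem flat_dual [IsNoetherianRing R] (hA : Module.Injective R A) :
    Module.Flat R (CharacterModule A) := by
  apply Module.Flat.of_forall_isTrivialRelation
  intro l f x hx
  let ρ : (Fin l → R) →ₗ[R] R := Fintype.linearCombination R f
  obtain ⟨k, a, ha⟩ := Submodule.fg_iff_exists_fin_generating_family.1
    (IsNoetherian.noetherian (LinearMap.ker ρ))
  let α : (Fin l → A) →ₗ[R] (Fin k → A) :=
    LinearMap.pi fun j => ∑ i, a j i • LinearMap.proj i
  have hα : ∀ y j, α y j = ∑ i, a j i • y i := by intro y j; simp [α]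
  let ξ : (Fin l → A) →+ AddCircle (1 : ℚ) :=
    ∑ i, (AddMonoidHom.comp (x i) (Pi.evalAddMonoidHom (fun _ => A) i))
  have hξ : ∀ y, ξ y = ∑ i, x i (y i) := by
    intro y; simp only [ξ, AddMonoidHom.finsetSum_apply]; rfl
  have hker : ∀ y, α y = 0 → ξ y = 0 := by
    intro y hy
    let η : (Fin l → R) →ₗ[R] A := Fintype.linearCombination R y
    have h1 : LinearMap.ker ρ ≤ LinearMap.ker η := by
      rw [← ha, Submodule.span_le]
      rintro _ ⟨j, rfl⟩
      have := congrFun hy j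
      rw [hα] at this
      simpa [η, Fintype.linearCombination_apply] using this
    obtain ⟨θ, hθ⟩ := exists_desc (LinearMap.surjective_rangeRestrict ρ) η (fun b hb => h1 (by
      simpa using congrArg Subtype.val hb))
    obtain ⟨θ', hθ'⟩ := Module.Baer.of_injective hA _ θ
    have hy' : ∀ i, y i = f i • θ' 1 := by
      intro i
      have e1 : ρ (Pi.single i 1) = f i := by simp [ρ]
      have e2 := hθ (Pi.single i 1)
      have e3 := hθ' (ρ (Pi.single i 1)) ⟨_, rfl⟩
      have e4 : η (Pi.single i 1) = y i := by simp [η]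
      rw [← e4, ← e2, ← map_smul]
      simp only [smul_eq_mul, mul_one]
      rw [← e1, e3]
      rfl
    rw [hξ]
    have : (∑ i, f i • x i) (θ' 1) = 0 := by rw [hx]; rfl
    rw [← this]
    have : ∀ z : A, (∑ i, f i • x i) z = ∑ i, x i (f i • z) := by
      intro z
      exact (AddMonoidHom.finsetSum_apply (M := A) (N := AddCircle (1:ℚ))
        (fun i => f i • x i) Finset.univ z)
    rw [this]
    exact Finset.sum_congr rfl fun i _ => by rw [hy']
  obtain ⟨χ, hχ⟩ := exists_desc_char (LinearMap.surjective_rangeRestrict α) ξ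
      (fun b hb => hker b (by simpa using congrArg Subtype.val hb))
  obtain ⟨ω, hω⟩ := CharacterModule.dual_surjective_of_injective (LinearMap.range α).subtype
    Subtype.val_injective χ
  have hω' : ∀ y, ω (α y) = ξ y := by
    intro y
    have h1 := DFunLike.congr_fun hω (LinearMap.rangeRestrict α y)
    exact h1.trans (hχ y)
  refine ⟨k, fun i j => a j i, fun j => CharacterModule.dual (LinearMap.single R (fun _ => A) j) ω,
    ?_, ?_⟩
  · intro i
    apply CharacterModule.ext
    intro z
    have h1 := hω' (Pi.single i z)
    rw [hξ] at h1
    have h2 : ∑ i', x i' ((Pi.single i z : Fin l → A) i') = x i z := by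
      rw [Finset.sum_eq_single i] <;> simp +contextual [Pi.single_apply]
    rw [h2] at h1
    rw [← h1]
    have h3 : α (Pi.single i z) = ∑ j, LinearMap.single R (fun _ => A) j (a j i • z) := by
      ext j
      rw [hα, Finset.sum_eq_single i]
      · simp [Finset.sum_apply, Pi.single_apply]
      · intro b _ hb; simp [hb]
      · simp
    rw [h3, map_sum]
    symm
    exact (AddMonoidHom.finsetSum_apply (M := A) (N := AddCircle (1:ℚ)) _ Finset.univ z)
  · intro j
    have : a j ∈ LinearMap.ker ρ := by rw [← ha]; exact Submodule.subset_span ⟨j, rfl⟩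
    simpa [ρ, Fintype.linearCombination_apply, mul_comm] using this

end Basics

end GFD

namespace GFD

section RightClass

variable (R : Type u) [CommRing R]

/-- One step of a pure flat (co)resolution. -/
def Step (A C : Type u) [AddCommGroup A] [Module R A] [AddCommGroup C] [Module R C] : Prop :=
  ∃ F : ModuleCat.{u} R, ∃ (f : A →ₗ[R] F) (g : F →ₗ[R] C),
    Module.Flat R F ∧ SES f g ∧ PureD f

/-- Relative injectivity with respect to pure maps. -/
def PInj (F : Type u) [AddCommGroup F] [Module R F] : Prop :=
  ∀ (A B : Type u) [AddCommGroup A] [Module R A] [AddCommGroup B] [Module R B]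
    (f : A →ₗ[R] B), PureD f → ∀ φ : A →ₗ[R] F, ∃ ψ : B →ₗ[R] F, ∀ a, ψ (f a) = φ a

/-- A step through a relatively injective flat module. -/
def SStep (A C : Type u) [AddCommGroup A] [Module R A] [AddCommGroup C] [Module R C] : Prop :=
  ∃ F : ModuleCat.{u} R, ∃ (f : A →ₗ[R] F) (g : F →ₗ[R] C),
    Module.Flat R F ∧ PInj R F ∧ SES f g ∧ PureD f

/-- Modules with a pure flat coresolution. -/
def WRC (K : Type u) [AddCommGroup K] [Module R K] : Prop :=
  ∃ P : ModuleCat.{u} R → Prop, P (ModuleCat.of R K) ∧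
    ∀ A, P A → ∃ X, P X ∧ Step R A X

/-- Finite pure extensions of modules with a pure flat coresolution. -/
inductive Filt : ModuleCat.{u} R → Prop
  | base (A : ModuleCat.{u} R) (h : WRC R A) : Filt A
  | ext (A B C : ModuleCat.{u} R) (f : A →ₗ[R] B) (g : B →ₗ[R] C) (h : SES f g) (hp : PureD f)
      (hA : Filt A) (hC : Filt C) : Filt B

variable {R}
variable {A B C D : Type u} [AddCommGroup A] [Module R A] [AddCommGroup B] [Module R B]
  [AddCommGroup C] [Module R C] [AddCommGroup D] [Module R D]

theorem WRC.unfold (h : WRC R A) : ∃ A' : ModuleCat.{u} R, WRC R A' ∧ Step R A A' := by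
  obtain ⟨P, hP, hs⟩ := h
  obtain ⟨A', hA', hst⟩ := hs _ hP
  exact ⟨A', ⟨P, hA', hs⟩, hst⟩

theorem pureD_of_bijective {f : A →ₗ[R] B} (hf : Function.Bijective f) : PureD f := by
  intro E _ _ _ φ
  refine ⟨φ ∘ₗ (LinearEquiv.ofBijective f hf).symm.toLinearMap, ?_⟩
  ext1 a
  simp only [LinearMap.comp_apply, LinearEquiv.coe_coe]
  congr 1
  rw [LinearEquiv.symm_apply_eq]; rfl

theorem WRC.of_flat (h : Module.Flat R A) : WRC R A := by
  refine ⟨fun X => Module.Flat R X, h, fun X hX => ⟨ModuleCat.of R PUnit, ?_, X,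
    LinearMap.id, 0, hX, ⟨Function.injective_id, ?_, ?_⟩,
    pureD_of_bijective Function.bijective_id⟩⟩
  · change Module.Flat R PUnit.{u+1}
    infer_instance
  · intro x; simp
  · intro x; exact ⟨0, Subsingleton.elim _ _⟩

theorem flat_prod (hA : Module.Flat R A) (hB : Module.Flat R B) : Module.Flat R (A × B) := by
  rw [flat_iff] at hA hB ⊢
  refine ⟨fun X Y _ _ _ _ f hf φ => ?_⟩
  obtain ⟨ψ, hψ⟩ := hA.out f hf (CharacterModule.dual (LinearMap.inl R A B) ∘ₗ φ)
  obtain ⟨χ, hχ⟩ := hB.out f hf (CharacterModule.dual (LinearMap.inr R A B) ∘ₗ φ)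
  refine ⟨CharacterModule.dual (LinearMap.fst R A B) ∘ₗ ψ +
    CharacterModule.dual (LinearMap.snd R A B) ∘ₗ χ, fun x => ?_⟩
  apply CharacterModule.ext
  rintro ⟨a, b⟩
  change ψ (f x) a + χ (f x) b = φ x (a, b)
  rw [hψ, hχ]
  change φ x (a, 0) + φ x (0, b) = φ x (a, b)
  rw [← map_add]
  simp

theorem PInj.char (h : Module.Injective R A) : PInj R (CharacterModule A) := by
  intro X Y _ _ _ _ f hf φ
  obtain ⟨ψ, hψ⟩ := hf A h φ
  exact ⟨ψ, fun a => LinearMap.congr_fun hψ a⟩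

theorem PInj.prod (hA : PInj R A) (hB : PInj R B) : PInj R (A × B) := by
  intro X Y _ _ _ _ f hf φ
  obtain ⟨ψ, hψ⟩ := hA X Y f hf (LinearMap.fst R A B ∘ₗ φ)
  obtain ⟨χ, hχ⟩ := hB X Y f hf (LinearMap.snd R A B ∘ₗ φ)
  exact ⟨ψ.prod χ, fun a => Prod.ext (hψ a) (hχ a)⟩

/-- Quotients of a bigger module. -/
theorem third {F A' : Type u} [AddCommGroup F] [Module R F] [AddCommGroup A'] [Module R A']
    {f : A →ₗ[R] F} {g : F →ₗ[R] A'} (h : SES f g) (i : F →ₗ[R] D) (hi : Function.Injective i)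
    (hp : PureD i) {X Y : Type u} [AddCommGroup X] [Module R X] [AddCommGroup Y] [Module R Y]
    {p : D →ₗ[R] X} (hX : SES (i ∘ₗ f) p) {q : D →ₗ[R] Y} (hY : SES i q) :
    ∃ (u : A' →ₗ[R] X) (v : X →ₗ[R] Y), SES u v ∧ PureD u ∧ (∀ x, u (g x) = p (i x)) ∧
      ∀ d, v (p d) = q d := by
  obtain ⟨u, hu⟩ := h.desc (p ∘ₗ i) (fun a => hX.zero a)
  obtain ⟨v, hv⟩ := hX.desc q (fun a => hY.zero _)
  refine ⟨u, v, ⟨?_, ?_, ?_⟩, ?_, hu, hv⟩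
  · rw [injective_iff_map_eq_zero]
    intro a' ha'
    obtain ⟨x, rfl⟩ := h.surj a'
    rw [hu] at ha'
    obtain ⟨a, ha⟩ := hX.lift _ ha'
    rw [← hi ha]
    exact h.zero a
  · intro x
    obtain ⟨d, rfl⟩ := hX.surj x
    rw [hv]
    constructor
    · intro hd
      obtain ⟨y, rfl⟩ := hY.lift d hd
      exact ⟨g y, hu y⟩
    · rintro ⟨a', ha'⟩
      obtain ⟨y, rfl⟩ := h.surj a'
      rw [hu] at ha'
      rw [← hv, ← ha']
      change v (p (i y)) = 0
      rw [hv, hY.zero]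
  · intro y
    obtain ⟨d, rfl⟩ := hY.surj y
    exact ⟨p d, hv d⟩
  · intro E _ _ hE φ
    obtain ⟨ψ, hψ⟩ := hp E hE (φ ∘ₗ g)
    have hψ' : ∀ x, ψ (i x) = φ (g x) := fun x => LinearMap.congr_fun hψ x
    obtain ⟨χ, hχ⟩ := hX.desc ψ (fun a => by
      change ψ (i (f a)) = 0
      rw [hψ', h.zero, map_zero])
    refine ⟨χ, ?_⟩
    ext1 a'
    obtain ⟨x, rfl⟩ := h.surj a'
    change χ (u (g x)) = _
    rw [hu]
    change χ (p (i x)) = _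
    rw [hχ, hψ']

theorem horseshoe {FA A' FC C' : Type u} [AddCommGroup FA] [Module R FA] [AddCommGroup A']
    [Module R A'] [AddCommGroup FC] [Module R FC] [AddCommGroup C'] [Module R C']
    {f : A →ₗ[R] B} {g : B →ₗ[R] C} (h : SES f g) (hf : PureD f)
    {jA : A →ₗ[R] FA} {pA : FA →ₗ[R] A'} (hA : SES jA pA) (hjA : PureD jA) (hFA : PInj R FA)
    {jC : C →ₗ[R] FC} {pC : FC →ₗ[R] C'} (hC : SES jC pC) (hjC : PureD jC) :
    ∃ (B' : ModuleCat.{u} R) (j : B →ₗ[R] FA × FC) (p : FA × FC →ₗ[R] B') (u : A' →ₗ[R] B')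
      (v : B' →ₗ[R] C'), SES j p ∧ PureD j ∧ SES u v ∧ PureD u := by
  obtain ⟨e, he⟩ := hFA A B f hf jA
  let j : B →ₗ[R] FA × FC := e.prod (jC ∘ₗ g)
  have hj : Function.Injective j := by
    rw [injective_iff_map_eq_zero]
    intro b hb
    have h1 : e b = 0 := congrArg Prod.fst hb
    have h2 : jC (g b) = 0 := congrArg Prod.snd hb
    have h3 : g b = 0 := hC.inj (by rw [h2, map_zero])
    obtain ⟨a, rfl⟩ := h.lift b h3
    rw [he] at h1
    rw [hA.inj (h1.trans (map_zero jA).symm), map_zero]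
  have hjp : PureD j := by
    intro E _ _ hE φ
    obtain ⟨ψ, hψ⟩ := hjA E hE (φ ∘ₗ f)
    have hψ' : ∀ x, ψ (jA x) = φ (f x) := fun x => LinearMap.congr_fun hψ x
    obtain ⟨χ, hχ⟩ := h.desc (φ - ψ ∘ₗ e) (fun a => by simp [he, hψ'])
    obtain ⟨χ', hχ'⟩ := hjC E hE χ
    have hχ'' : ∀ x, χ' (jC x) = χ x := fun x => LinearMap.congr_fun hχ' x
    refine ⟨ψ.coprod χ', ?_⟩
    ext1 b
    change (ψ.coprod χ') (e b, jC (g b)) = φ b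
    rw [LinearMap.coprod_apply, hχ'', hχ]
    simp
  let p := (LinearMap.range j).mkQ
  have hp : SES j p := SES.coker hj
  obtain ⟨u, hu⟩ := hA.desc (p ∘ₗ LinearMap.inl R FA FC) (fun a => by
    have : (jA a, (0 : FC)) = j (f a) := by
      simp [j, he, h.zero]
    change p (jA a, 0) = 0
    rw [this, hp.zero])
  have hu' : ∀ x, u (pA x) = p (x, 0) := hu
  obtain ⟨v, hv⟩ := hp.desc (pC ∘ₗ LinearMap.snd R FA FC) (fun b => by
    simp [j, hC.zero])
  have hv' : ∀ x y, v (p (x, y)) = pC y := fun x y => hv (x, y)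
  refine ⟨ModuleCat.of R ((FA × FC) ⧸ LinearMap.range j), j, p, u, v, hp, hjp, ⟨?_, ?_, ?_⟩, ?_⟩
  · rw [injective_iff_map_eq_zero]
    intro a' ha'
    obtain ⟨x, rfl⟩ := hA.surj a'
    rw [hu'] at ha'
    obtain ⟨b, hb⟩ := hp.lift _ ha'
    have h1 : e b = x := congrArg Prod.fst hb
    have h2 : jC (g b) = 0 := congrArg Prod.snd hb
    have h3 : g b = 0 := hC.inj (by rw [h2, map_zero])
    obtain ⟨a, rfl⟩ := h.lift b h3
    rw [← h1, he, hA.zero]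
  · intro z
    obtain ⟨⟨x, y⟩, rfl⟩ := hp.surj z
    rw [hv']
    constructor
    · intro hy
      obtain ⟨c, rfl⟩ := hC.lift y hy
      obtain ⟨b, rfl⟩ := h.surj c
      refine ⟨pA (x - e b), ?_⟩
      rw [hu', ← sub_eq_zero, ← map_sub]
      have : ((x - e b, 0) - (x, jC (g b)) : FA × FC) = - j b := by
        simp [j]
      rw [this, map_neg, hp.zero, neg_zero]
    · rintro ⟨a', ha'⟩
      obtain ⟨x', rfl⟩ := hA.surj a'
      rw [← hv' x y, ← ha', hu', hv', map_zero]
  · intro c'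
    obtain ⟨y, rfl⟩ := hC.surj c'
    exact ⟨p (0, y), hv' 0 y⟩
  · intro E _ _ hE φ
    obtain ⟨χ, hχ⟩ := h.desc (φ ∘ₗ pA ∘ₗ e) (fun a => by simp [he, hA.zero])
    obtain ⟨χ', hχ'⟩ := hjC E hE χ
    have hχ'' : ∀ x, χ' (jC x) = χ x := fun x => LinearMap.congr_fun hχ' x
    obtain ⟨ω, hω⟩ := hp.desc ((φ ∘ₗ pA).coprod (-χ')) (fun b => by
      simp [j, hχ'', hχ])
    refine ⟨ω, ?_⟩
    ext1 a'
    obtain ⟨x, rfl⟩ := hA.surj a'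
    change ω (u (pA x)) = _
    rw [hu', hω]
    simp

theorem Filt.step [IsNoetherianRing R] {B : ModuleCat.{u} R} (h : Filt R B) :
    ∃ B' : ModuleCat.{u} R, Filt R B' ∧ SStep R B B' := by
  induction h with
  | base A h =>
    obtain ⟨A', hA', F, f, g, hF, hs, hp⟩ := h.unfold
    have hD : Module.Injective R (CharacterModule F) := flat_iff.1 hF
    have hinj : Function.Injective (ev R F ∘ₗ f) :=
      (ev_injective (R := R) (A := F)).comp hs.inj
    have hX := SES.coker hinj
    have hY := SES.coker (ev_injective (R := R) (A := F))
    obtain ⟨u, v, huv, hu, -, -⟩ := third hs (ev R F) ev_injective pureD_ev hX hY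
    have hDf := flat_dual hD
    have hYf := hY.flat_coker hDf (ev R (CharacterModule F)) dual_ev
    refine ⟨ModuleCat.of R (CharacterModule (CharacterModule F) ⧸ LinearMap.range (ev R F ∘ₗ f)),
      Filt.ext A' _ (ModuleCat.of R _) u v huv hu (.base _ hA') (.base _ (WRC.of_flat hYf)),
      ModuleCat.of R (CharacterModule (CharacterModule F)), ev R F ∘ₗ f, _, hDf, PInj.char hD,
      hX, hp.comp pureD_ev⟩
  | ext A B C f g h hp hA hC ihA ihC =>
    obtain ⟨A', hA', FA, jA, pA, hFA, hPA, hsA, hpA⟩ := ihA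
    obtain ⟨C', hC', FC, jC, pC, hFC, hPC, hsC, hpC⟩ := ihC
    obtain ⟨B', j, p, u, v, h1, h2, h3, h4⟩ := horseshoe h hp hsA hpA hPA hsC hpC
    refine ⟨B', Filt.ext A' B' C' u v h3 h4 hA' hC', ModuleCat.of R (FA × FC), j, p, ?_,
      hPA.prod hPC, h1, h2⟩
    exact flat_prod hFA hFC

theorem SStep.step (h : SStep R A C) : Step R A C := by
  obtain ⟨F, f, g, h1, _, h2, h3⟩ := h
  exact ⟨F, f, g, h1, h2, h3⟩

theorem Filt.wrc [IsNoetherianRing R] (h : Filt R (ModuleCat.of R B)) : WRC R B := by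
  refine ⟨Filt R, h, fun A hA => ?_⟩
  obtain ⟨A', h1, h2⟩ := hA.step
  exact ⟨A', h1, h2.step⟩

theorem WRC.sunfold [IsNoetherianRing R] (h : WRC R A) :
    ∃ A' : ModuleCat.{u} R, WRC R A' ∧ SStep R A A' := by
  obtain ⟨A', h1, h2⟩ := (Filt.base (ModuleCat.of R A) h).step
  exact ⟨A', Filt.wrc h1, h2⟩

theorem WRC.ext [IsNoetherianRing R] {f : A →ₗ[R] B} {g : B →ₗ[R] C} (h : SES f g)
    (hp : PureD f) (hA : WRC R A) (hC : WRC R C) : WRC R B :=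
  Filt.wrc (.ext (ModuleCat.of R A) (ModuleCat.of R B) (ModuleCat.of R C) f g h hp
    (.base _ hA) (.base _ hC))

theorem WRC.of_step [IsNoetherianRing R] (hC : WRC R C) (h : Step R A C) : WRC R A := by
  refine ⟨fun X => WRC R X ∨ ∃ Y : ModuleCat.{u} R, WRC R Y ∧ Step R X Y,
    Or.inr ⟨ModuleCat.of R C, hC, h⟩, fun X hX => ?_⟩
  rcases hX with hX | ⟨Y, hY, hs⟩
  · obtain ⟨Y, hY, hs⟩ := hX.unfold
    exact ⟨Y, Or.inl hY, hs⟩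
  · exact ⟨Y, Or.inl hY, hs⟩

/-- pure submodules (kernels of pure epimorphisms) -/
theorem WRC.ker [IsNoetherianRing R] {f : A →ₗ[R] B} {g : B →ₗ[R] C} (h : SES f g)
    (hp : PureD f) (hB : WRC R B) (hC : WRC R C) : WRC R A := by
  obtain ⟨B', hB', F, j, p, hF, hs, hj⟩ := hB.unfold
  have hX := SES.coker (f := j ∘ₗ f) (hs.inj.comp h.inj)
  obtain ⟨u, v, huv, hu, -, -⟩ := third h j hs.inj hj hX hs
  exact WRC.of_step (WRC.ext huv hu hC hB') ⟨F, j ∘ₗ f, _, hF, hX, hp.comp hj⟩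

theorem WRC.of_prod [IsNoetherianRing R] (hD : WRC R D) (h : WRC R (D × C)) : WRC R C := by
  refine WRC.ker (f := LinearMap.inr R D C) (g := LinearMap.fst R D C) ⟨?_, ?_, ?_⟩ ?_ h hD
  · exact LinearMap.inr_injective
  · exact Function.Exact.inr_fst
  · exact LinearMap.fst_surjective
  · intro E _ _ _ φ
    exact ⟨φ ∘ₗ LinearMap.snd R D C, by ext; simp⟩

/-- cokernels of pure embeddings into flat modules -/
theorem WRC.coker [IsNoetherianRing R] {f : A →ₗ[R] B} {g : B →ₗ[R] C} (h : SES f g)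
    (hp : PureD f) (hA : WRC R A) (hB : Module.Flat R B) : WRC R C := by
  obtain ⟨A', hA', F, j, p, hF, hPF, hs, hj⟩ := hA.sunfold
  obtain ⟨k, hk⟩ := hPF A B f hp j
  obtain ⟨w, hw⟩ := h.desc (p ∘ₗ k) (fun a => by simp [hk, hs.zero])
  have hw' : ∀ b, w (g b) = p (k b) := hw
  have hF' : WRC R (ModuleCat.carrier F) := WRC.of_flat hF
  apply WRC.of_prod hF'
  refine WRC.ext (f := k.prod g) (g := p.coprod (-w)) ⟨?_, ?_, ?_⟩ ?_ (WRC.of_flat hB) hA'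
  · rw [injective_iff_map_eq_zero]
    intro b hb
    have h1 : k b = 0 := congrArg Prod.fst hb
    have h2 : g b = 0 := congrArg Prod.snd hb
    obtain ⟨a, rfl⟩ := h.lift b h2
    rw [hk] at h1
    rw [hs.inj (h1.trans (map_zero j).symm), map_zero]
  · rintro ⟨x, c⟩
    constructor
    · intro hx
      obtain ⟨b, rfl⟩ := h.surj c
      have h1 : p (x - k b) = 0 := by
        rw [map_sub, ← hw']; simpa [sub_eq_add_neg] using hx
      obtain ⟨a, ha⟩ := hs.lift _ h1
      refine ⟨b + f a, ?_⟩
      simp [hk, ha, h.zero]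
    · rintro ⟨b, hb⟩
      rw [← hb]
      simp [hw']
  · intro a'
    obtain ⟨x, rfl⟩ := hs.surj a'
    exact ⟨(x, 0), by simp⟩
  · intro E _ _ hE φ
    obtain ⟨ψ, hψ⟩ := hj E hE (φ ∘ₗ f)
    have hψ' : ∀ x, ψ (j x) = φ (f x) := fun x => LinearMap.congr_fun hψ x
    obtain ⟨χ, hχ⟩ := h.desc (φ - ψ ∘ₗ k) (fun a => by simp [hk, hψ'])
    refine ⟨ψ.coprod χ, ?_⟩
    ext1 b
    simp [hχ]

end RightClass

end GFD

namespace GFD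

section LeftClass

open CategoryTheory.Abelian

variable (R : Type u) [CommRing R]

/-- Vanishing of higher Ext into duals of injectives (equivalently of `Tor` with injectives). -/
def TV (K : Type u) [AddCommGroup K] [Module R K] : Prop :=
  ∀ (n : ℕ) (E : Type u) [AddCommGroup E] [Module R E], Module.Injective R E →
    ∀ x : Ext (ModuleCat.of R K) (ModuleCat.of R (CharacterModule E)) (n + 1), x = 0

variable {R}
variable {A B C D : Type u} [AddCommGroup A] [Module R A] [AddCommGroup B] [Module R B]
  [AddCommGroup C] [Module R C] [AddCommGroup D] [Module R D]

/-- The associated short complex. -/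
noncomputable abbrev SES.sc {f : A →ₗ[R] B} {g : B →ₗ[R] C} (h : SES f g) :
    ShortComplex (ModuleCat.{u} R) :=
  ShortComplex.mk (ModuleCat.ofHom f) (ModuleCat.ofHom g) (by
    ext a; exact h.zero a)

theorem SES.shortExact {f : A →ₗ[R] B} {g : B →ₗ[R] C} (h : SES f g) : h.sc.ShortExact where
  exact := (ShortComplex.ShortExact.moduleCat_exact_iff_function_exact _).mpr h.ex
  mono_f := (ModuleCat.mono_iff_injective _).2 h.inj
  epi_g := (ModuleCat.epi_iff_surjective _).2 h.surj

theorem TV.pure {f : A →ₗ[R] B} {g : B →ₗ[R] C} (h : SES f g) (hC : TV R C) : PureD f := by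
  intro E _ _ hE φ
  obtain ⟨y, hy⟩ := Ext.contravariant_sequence_exact₁ h.shortExact
    (ModuleCat.of R (CharacterModule E)) (Ext.mk₀ (ModuleCat.ofHom φ)) (n₁ := 1) rfl
    (hC 0 E hE _)
  obtain ⟨ψ, rfl⟩ := (Ext.mk₀_bijective _ _).2 y
  rw [Ext.mk₀_comp_mk₀] at hy
  have := (Ext.mk₀_bijective _ _).1 hy
  refine ⟨ψ.hom, ?_⟩
  ext1 a
  exact congrArg (fun k => k.hom a) this

theorem comp_eq_zero' {X Y Z : ModuleCat.{u} R} {a b c : ℕ} (α : Ext X Y a) {β : Ext Y Z b}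
    (h : β = 0) {hh : a + b = c} : α.comp β hh = 0 := by
  subst h; exact Ext.comp_zero ..

theorem TV.ker {f : A →ₗ[R] B} {g : B →ₗ[R] C} (h : SES f g) (hB : TV R B) (hC : TV R C) :
    TV R A := by
  intro n E _ _ hE x
  obtain ⟨y, hy⟩ := Ext.contravariant_sequence_exact₁ h.shortExact
    (ModuleCat.of R (CharacterModule E)) x (n₁ := n + 1 + 1) (by omega)
    (hC _ E hE _)
  have h0 := hB n E hE y
  rw [← hy]
  exact comp_eq_zero' _ h0

theorem TV.mid {f : A →ₗ[R] B} {g : B →ₗ[R] C} (h : SES f g) (hA : TV R A) (hC : TV R C) :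
    TV R B := by
  intro n E _ _ hE x
  obtain ⟨y, hy⟩ := Ext.contravariant_sequence_exact₂ h.shortExact
    (ModuleCat.of R (CharacterModule E)) x (hA _ E hE _)
  have h0 := hC n E hE y
  rw [← hy]
  exact comp_eq_zero' _ h0

theorem ext_coker_one {f : A →ₗ[R] B} {g : B →ₗ[R] C} (h : SES f g)
    (hp : PureD f) (E : Type u) [AddCommGroup E] [Module R E] (hE : Module.Injective R E)
    (hB : ∀ x : Ext (ModuleCat.of R B) (ModuleCat.of R (CharacterModule E)) 1, x = 0)
    (x : Ext (ModuleCat.of R C) (ModuleCat.of R (CharacterModule E)) 1) : x = 0 := by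
  obtain ⟨y, hy⟩ := Ext.contravariant_sequence_exact₃ h.shortExact
    (ModuleCat.of R (CharacterModule E)) x (hB _) (n₀ := 0) rfl
  obtain ⟨φ, rfl⟩ := (Ext.mk₀_bijective _ _).2 y
  obtain ⟨ψ, hψ⟩ := hp E hE φ.hom
  let ψ' : h.sc.X₂ ⟶ ModuleCat.of R (CharacterModule E) := ModuleCat.ofHom ψ
  have : φ = h.sc.f ≫ ψ' := by
    apply ModuleCat.hom_ext
    exact hψ.symm
  rw [← hy, this, ← Ext.mk₀_comp_mk₀, ← Ext.comp_assoc_of_second_deg_zero,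
    ShortComplex.ShortExact.extClass_comp, Ext.zero_comp]

theorem ext_coker_succ {f : A →ₗ[R] B} {g : B →ₗ[R] C} (h : SES f g) (n : ℕ)
    (E : Type u) [AddCommGroup E] [Module R E]
    (hB : ∀ x : Ext (ModuleCat.of R B) (ModuleCat.of R (CharacterModule E)) (n + 2), x = 0)
    (hA : ∀ x : Ext (ModuleCat.of R A) (ModuleCat.of R (CharacterModule E)) (n + 1), x = 0)
    (x : Ext (ModuleCat.of R C) (ModuleCat.of R (CharacterModule E)) (n + 2)) : x = 0 := by
  obtain ⟨y, hy⟩ := Ext.contravariant_sequence_exact₃ h.shortExact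
    (ModuleCat.of R (CharacterModule E)) x (hB _) (n₀ := n + 1) (by omega)
  have h0 := hA y
  rw [← hy]
  exact comp_eq_zero' _ h0

theorem TV.coker {f : A →ₗ[R] B} {g : B →ₗ[R] C} (h : SES f g) (hp : PureD f)
    (hA : TV R A) (hB : TV R B) : TV R C := by
  intro n E _ _ hE x
  match n with
  | 0 => exact ext_coker_one h hp E hE (hB 0 E hE) x
  | n + 1 => exact ext_coker_succ h n E (hB (n + 1) E hE) (hA n E hE) x

theorem TV.of_projective [Module.Projective R A] : TV R A := by
  intro n E _ _ _ x
  have : CategoryTheory.Projective (ModuleCat.of R A) :=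
    (IsProjective.iff_projective A).1 inferInstance
  exact Ext.eq_zero_of_projective x

/-- Free covers. -/
theorem exists_cover (A : Type u) [AddCommGroup A] [Module R A] :
    ∃ (L K : ModuleCat.{u} R) (f : K →ₗ[R] L) (g : L →ₗ[R] A), Module.Projective R L ∧
      SES f g := by
  refine ⟨ModuleCat.of R (A →₀ R), ModuleCat.of R
    (LinearMap.ker (Finsupp.linearCombination R (id : A → A))), _,
    Finsupp.linearCombination R id, ?_, SES.ker (Finsupp.linearCombination_id_surjective R A)⟩
  change Module.Projective R (A →₀ R)
  infer_instance

theorem TV.of_flat (h : Module.Flat R A) : TV R A := by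
  intro n E _ _ hE
  induction n generalizing A with
  | zero =>
    obtain ⟨L, K, f, g, hL, hs⟩ := exists_cover (R := R) A
    exact ext_coker_one hs (hs.flat_ker inferInstance h).1 E hE (TV.of_projective 0 E hE)
  | succ n ih =>
    obtain ⟨L, K, f, g, hL, hs⟩ := exists_cover (R := R) A
    exact ext_coker_succ hs n E (TV.of_projective (n + 1) E hE)
      (ih (hs.flat_ker inferInstance h).2)

theorem TV.of_coind (P : ModuleCat.{u} R → Prop)
    (hP : ∀ A, P A → ∃ A' : ModuleCat.{u} R, P A' ∧ Step R A' A)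
    (h : P (ModuleCat.of R A)) : TV R A := by
  suffices H : ∀ n, ∀ A : ModuleCat.{u} R, P A → ∀ (E : Type u) [AddCommGroup E] [Module R E],
      Module.Injective R E →
      ∀ x : Ext (ModuleCat.of R A) (ModuleCat.of R (CharacterModule E)) (n + 1), x = 0 from
    fun n => H n _ h
  intro n
  induction n with
  | zero =>
    intro A hA E _ _ hE
    obtain ⟨A', hA', F, f, g, hF, hs, hp⟩ := hP A hA
    exact ext_coker_one hs hp E hE (TV.of_flat hF 0 E hE)
  | succ n ih =>
    intro A hA E _ _ hE
    obtain ⟨A', hA', F, f, g, hF, hs, hp⟩ := hP A hA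
    exact ext_coker_succ hs n E (TV.of_flat hF (n + 1) E hE) (ih A' hA' E hE)

theorem TV.unfold (h : TV R A) : ∃ A' : ModuleCat.{u} R, TV R A' ∧ Step R A' A := by
  obtain ⟨L, K, f, g, hL, hs⟩ := exists_cover (R := R) A
  have hL' : TV R L := TV.of_projective
  exact ⟨K, hL'.ker hs h, L, f, g, inferInstance, hs, h.pure hs⟩

/-- The working version of Gorenstein flatness. -/
def GF (R : Type u) [CommRing R] (K : Type u) [AddCommGroup K] [Module R K] : Prop :=
  TV R K ∧ WRC R K

theorem GF.of_flat (h : Module.Flat R A) : GF R A := ⟨TV.of_flat h, WRC.of_flat h⟩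

variable [IsNoetherianRing R]

theorem GF.ker {f : A →ₗ[R] B} {g : B →ₗ[R] C} (h : SES f g) (hB : GF R B) (hC : GF R C) :
    GF R A :=
  ⟨hB.1.ker h hC.1, WRC.ker h (hC.1.pure h) hB.2 hC.2⟩

theorem GF.mid {f : A →ₗ[R] B} {g : B →ₗ[R] C} (h : SES f g) (hA : GF R A) (hC : GF R C) :
    GF R B :=
  ⟨hA.1.mid h hC.1, WRC.ext h (hC.1.pure h) hA.2 hC.2⟩

theorem GF.coker {f : A →ₗ[R] B} {g : B →ₗ[R] C} (h : SES f g) (hp : PureD f) (hA : GF R A)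
    (hB : Module.Flat R B) : GF R C :=
  ⟨hA.1.coker h hp (TV.of_flat hB), hA.2.coker h hp hB⟩

theorem GF.of_equiv (e : A ≃ₗ[R] B) (h : GF R A) : GF R B := by
  have hz : GF R PUnit.{u+1} := GF.of_flat inferInstance
  refine GF.ker (f := e.symm.toLinearMap) (g := (0 : A →ₗ[R] PUnit.{u+1})) ⟨e.symm.injective, ?_, ?_⟩
    h hz
  · intro a
    simp only [LinearMap.zero_apply, true_iff]
    exact e.symm.surjective a
  · intro x; exact ⟨0, Subsingleton.elim _ _⟩

theorem GF.prod (hA : GF R A) (hB : GF R B) : GF R (A × B) :=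
  GF.mid (f := LinearMap.inl R A B) (g := LinearMap.snd R A B)
    ⟨LinearMap.inl_injective, Function.Exact.inl_snd, LinearMap.snd_surjective⟩ hA hB

theorem GF.left (h : GF R A) : ∃ A' : ModuleCat.{u} R, GF R A' ∧ Step R A' A := by
  obtain ⟨L, K, f, g, hL, hs⟩ := exists_cover (R := R) A
  have hL' : GF R L := GF.of_flat inferInstance
  exact ⟨K, hL'.ker hs h, L, f, g, inferInstance, hs, h.1.pure hs⟩

theorem GF.right (h : GF R A) : ∃ A' : ModuleCat.{u} R, GF R A' ∧ Step R A A' := by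
  obtain ⟨A', hA', F, f, g, hF, hs, hp⟩ := h.2.unfold
  exact ⟨A', h.coker hs hp hF, F, f, g, hF, hs, hp⟩

end LeftClass

end GFD

namespace GFD

section Complexes

theorem exists_zseq {α : Type*} (P : α → Prop) (r : α → α → Prop)
    (hl : ∀ a, P a → ∃ b, P b ∧ r b a) (hr : ∀ a, P a → ∃ b, P b ∧ r a b) (a : α) (ha : P a) :
    ∃ Z : ℤ → α, Z 0 = a ∧ ∀ i, r (Z (i + 1)) (Z i) := by
  have hl' : ∀ x : {a // P a}, ∃ y : {a // P a}, r y.1 x.1 := by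
    rintro ⟨x, hx⟩
    obtain ⟨y, hy, h⟩ := hl x hx
    exact ⟨⟨y, hy⟩, h⟩
  have hr' : ∀ x : {a // P a}, ∃ y : {a // P a}, r x.1 y.1 := by
    rintro ⟨x, hx⟩
    obtain ⟨y, hy, h⟩ := hr x hx
    exact ⟨⟨y, hy⟩, h⟩
  choose l hl using hl'
  choose q hq using hr'
  let Z : ℤ → α := fun i => match i with
    | Int.ofNat n => (l^[n] ⟨a, ha⟩).1
    | Int.negSucc n => (q^[n + 1] ⟨a, ha⟩).1
  refine ⟨Z, rfl, fun i => ?_⟩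
  match i with
  | Int.ofNat n =>
    change r (l^[n + 1] ⟨a, ha⟩).1 (l^[n] ⟨a, ha⟩).1
    rw [Function.iterate_succ_apply']
    exact hl _
  | Int.negSucc 0 => exact hq ⟨a, ha⟩
  | Int.negSucc (n + 1) =>
    change r (q^[n + 1] ⟨a, ha⟩).1 (q^[n + 1 + 1] ⟨a, ha⟩).1
    rw [Function.iterate_succ_apply' q (n + 1)]
    exact hq _

variable {R : Type u} [CommRing R]

theorem ker_eq_range_of {A B C D E : Type u} [AddCommGroup A] [Module R A] [AddCommGroup B]
    [Module R B] [AddCommGroup C] [Module R C] [AddCommGroup D] [Module R D] [AddCommGroup E]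
    [Module R E] (g : A →ₗ[R] B) (f : B →ₗ[R] C) (g' : C →ₗ[R] D) (f' : D →ₗ[R] E)
    (hg : Function.Surjective g) (h : Function.Exact f g') (hf : Function.Injective f') :
    LinearMap.ker (f' ∘ₗ g') = LinearMap.range (f ∘ₗ g) := by
  rw [LinearMap.ker_comp_of_ker_eq_bot _ (LinearMap.ker_eq_bot.2 hf),
    LinearMap.range_comp_of_range_eq_top _ (LinearMap.range_eq_top.2 hg)]
  exact LinearMap.exact_iff.1 h

theorem equiv_of_eq {X Y : ModuleCat.{u} R} (h : X = Y) : Nonempty (X ≃ₗ[R] Y) := by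
  subst h; exact ⟨LinearEquiv.refl R X⟩

theorem GF.isGorensteinFlat [IsNoetherianRing R] {G : Type u} [AddCommGroup G] [Module R G]
    (h : GF R G) : IsGorensteinFlat R G := by
  obtain ⟨Z, hZ, hs⟩ := exists_zseq (fun X : ModuleCat.{u} R => GF R X)
    (fun X Y => Step R X Y) (fun X hX => hX.left) (fun X hX => hX.right) (ModuleCat.of R G) h
  choose F f g hF hfg hp using hs
  obtain ⟨e⟩ := equiv_of_eq hZ
  have hex : ∀ i : ℤ, LinearMap.ker (f i ∘ₗ g (i + 1)) =
      LinearMap.range (f (i + 1) ∘ₗ g (i + 1 + 1)) := fun i =>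
    ker_eq_range_of _ _ _ _ (hfg _).surj (hfg _).ex (hfg _).inj
  refine ⟨{ F := fun i => F i, flat := hF, d := fun i => f i ∘ₗ g (i + 1), d_comp_d := ?_,
            exact := hex, tensor_exact := ?_, im_iso := ?_ }⟩
  · intro i
    exact LinearMap.range_le_ker_iff.1 (hex i).ge
  · intro E _ _ hE i
    simp only [LinearMap.lTensor_comp]
    refine ker_eq_range_of _ _ _ _ (LinearMap.lTensor_surjective _ (hfg _).surj)
      (lTensor_exact _ (hfg _).ex (hfg _).surj) (pureD_iff'.1 (hp _) E hE)
  · have h1 : LinearMap.range (f (-1) ∘ₗ g (-1 + 1)) = LinearMap.range (f (-1)) :=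
      LinearMap.range_comp_of_range_eq_top _ (LinearMap.range_eq_top.2 (hfg _).surj)
    exact ⟨(e.symm.trans (LinearEquiv.ofInjective (f (-1)) (hfg (-1)).inj)).trans
      (LinearEquiv.ofEq _ _ h1.symm)⟩

section

variable {F : ℤ → Type u} [∀ i, AddCommGroup (F i)] [∀ i, Module R (F i)]
  (d : ∀ i : ℤ, F (i + 1) →ₗ[R] F i)

theorem step_of_complex (flat : ∀ i, Module.Flat R (F i))
    (exact : ∀ i : ℤ, LinearMap.ker (d i) = LinearMap.range (d (i + 1)))
    (tensor_exact : ∀ (E : Type u) [AddCommGroup E] [Module R E], Module.Injective R E →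
      ∀ i : ℤ, LinearMap.ker (LinearMap.lTensor E (d i)) =
        LinearMap.range (LinearMap.lTensor E (d (i + 1)))) (i : ℤ) :
    Step R (LinearMap.range (d (i + 1))) (LinearMap.range (d i)) := by
  refine ⟨ModuleCat.of R (F (i + 1)), (LinearMap.range (d (i + 1))).subtype,
    (d i).rangeRestrict, flat _, ⟨Subtype.val_injective, ?_, LinearMap.surjective_rangeRestrict _⟩,
    ?_⟩
  · rw [LinearMap.exact_iff]; simp [exact]
  · rw [pureD_iff']
    intro E _ _ hE
    rw [injective_iff_map_eq_zero]
    intro x hx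
    obtain ⟨y, rfl⟩ := LinearMap.lTensor_surjective E
      (LinearMap.surjective_rangeRestrict (d (i + 1))) x
    have h1 : LinearMap.lTensor E (d (i + 1)) y = 0 := by
      rw [← LinearMap.comp_apply, ← LinearMap.lTensor_comp] at hx
      exact hx
    have h2 : y ∈ LinearMap.range (LinearMap.lTensor E (d (i + 1 + 1))) := by
      rw [← tensor_exact E hE]; exact h1
    obtain ⟨z, rfl⟩ := h2
    rw [← LinearMap.comp_apply, ← LinearMap.lTensor_comp]
    have h3 : (d (i + 1)).rangeRestrict ∘ₗ d (i + 1 + 1) = 0 := by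
      ext1 w
      apply Subtype.ext
      have : d (i + 1 + 1) w ∈ LinearMap.ker (d (i + 1)) := by rw [exact]; exact ⟨w, rfl⟩
      exact this
    rw [h3]; simp

theorem gf_of_complex (flat : ∀ i, Module.Flat R (F i))
    (exact : ∀ i : ℤ, LinearMap.ker (d i) = LinearMap.range (d (i + 1)))
    (tensor_exact : ∀ (E : Type u) [AddCommGroup E] [Module R E], Module.Injective R E →
      ∀ i : ℤ, LinearMap.ker (LinearMap.lTensor E (d i)) =
        LinearMap.range (LinearMap.lTensor E (d (i + 1)))) (i : ℤ) :
    GF R (LinearMap.range (d i)) := by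
  have hs := step_of_complex d flat exact tensor_exact
  constructor
  · refine TV.of_coind (fun X => ∃ i, X = ModuleCat.of R (LinearMap.range (d i))) ?_ ⟨i, rfl⟩
    rintro _ ⟨i, rfl⟩
    exact ⟨_, ⟨i + 1, rfl⟩, hs i⟩
  · refine ⟨fun X => ∃ i, X = ModuleCat.of R (LinearMap.range (d i)), ⟨i, rfl⟩, ?_⟩
    rintro _ ⟨i, rfl⟩
    obtain ⟨j, rfl⟩ : ∃ j, i = j + 1 := ⟨i - 1, by ring⟩
    exact ⟨_, ⟨j, rfl⟩, hs j⟩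

end

theorem gf_iff [IsNoetherianRing R] {G : Type u} [AddCommGroup G] [Module R G] :
    IsGorensteinFlat R G ↔ GF R G := by
  refine ⟨?_, GF.isGorensteinFlat⟩
  rintro ⟨W⟩
  let := W.acg
  let := W.mod
  obtain ⟨e⟩ := W.im_iso
  exact GF.of_equiv e.symm (gf_of_complex W.d W.flat W.exact W.tensor_exact (-1))

end Complexes

end GFD

namespace GFD

section Dimension

variable {R : Type u} [CommRing R]
variable {A B C D : Type u} [AddCommGroup A] [Module R A] [AddCommGroup B] [Module R B]
  [AddCommGroup C] [Module R C] [AddCommGroup D] [Module R D]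

theorem SES.linLift {f : A →ₗ[R] B} {g : B →ₗ[R] C} (h : SES f g) (τ : D →ₗ[R] B)
    (h0 : ∀ x, g (τ x) = 0) : ∃ σ : D →ₗ[R] A, ∀ x, f (σ x) = τ x := by
  let e := LinearEquiv.ofInjective f h.inj
  refine ⟨e.symm.toLinearMap ∘ₗ LinearMap.codRestrict _ τ (fun x => h.lift _ (h0 x)), fun x => ?_⟩
  have : e (e.symm (LinearMap.codRestrict _ τ (fun x => h.lift _ (h0 x)) x)) = _ :=
    e.apply_symm_apply _
  exact congrArg Subtype.val this

variable (R) in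
/-- Gorenstein flat dimension at most `n`, recursively. -/
def GD : ℕ → ModuleCat.{u} R → Prop
  | 0, M => GF R M
  | n + 1, M => ∃ (N G : ModuleCat.{u} R) (f : N →ₗ[R] G) (g : G →ₗ[R] M),
      SES f g ∧ GF R G ∧ GD n N

theorem GD.mk {n : ℕ} {f : A →ₗ[R] B} {g : B →ₗ[R] C} (h : SES f g) (hB : GF R B)
    (hA : GD R n (ModuleCat.of R A)) : GD R (n + 1) (ModuleCat.of R C) :=
  ⟨ModuleCat.of R A, ModuleCat.of R B, f, g, h, hB, hA⟩

variable [IsNoetherianRing R]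

theorem GD.mid {n : ℕ} {a : A →ₗ[R] B} {b : B →ₗ[R] C} (h : SES a b)
    (hA : GD R n (ModuleCat.of R A)) (hC : GF R C) : GD R n (ModuleCat.of R B) := by
  induction n generalizing A B C with
  | zero => exact GF.mid h hA hC
  | succ n ih =>
    obtain ⟨N', G, f, g, hs, hG, hN'⟩ := hA
    obtain ⟨L, C', i, π, hL, hc⟩ := exists_cover (R := R) C
    have hL' : GF R L := GF.of_flat inferInstance
    obtain ⟨φ, hφ⟩ := Module.projective_lifting_property b π h.surj
    have hφ' : ∀ l, b (φ l) = π l := fun l => LinearMap.congr_fun hφ l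
    let t : (G × L) →ₗ[R] B := (a ∘ₗ (show G →ₗ[R] A from g)).coprod φ
    have ht : ∀ x l, t (x, l) = a (g x) + φ l := fun x l => rfl
    have hts : Function.Surjective t := by
      intro y
      obtain ⟨l, hl⟩ := hc.surj (b y)
      obtain ⟨n0, hn0⟩ := h.lift (y - φ l) (by rw [map_sub, hφ', hl, sub_self])
      obtain ⟨x, rfl⟩ := hs.surj n0
      refine ⟨(x, l), ?_⟩
      rw [ht, hn0]; abel
    have hY := SES.ker hts
    obtain ⟨σ, hσ⟩ := hc.linLift (LinearMap.snd R G L ∘ₗ (LinearMap.ker t).subtype) (by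
      rintro ⟨⟨x, l⟩, hx⟩
      have hx' : a (g x) + φ l = 0 := hx
      change π l = 0
      rw [← hφ', eq_neg_of_add_eq_zero_right hx', map_neg, h.zero, neg_zero])
    refine GD.mk hY (hG.prod hL') ?_
    refine ih (A := N') (a := LinearMap.codRestrict _ (LinearMap.inl R G L ∘ₗ f) ?_)
      (b := σ) ⟨?_, ?_, ?_⟩ hN' (GF.ker hc hL' hC)
    · intro n
      change a (g (f n)) + φ 0 = 0
      rw [hs.zero]; simp
    · intro n n' hn
      have := congrArg (fun z => z.1.1) hn
      exact hs.inj this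
    · rintro ⟨⟨x, l⟩, hx⟩
      have hx' : a (g x) + φ l = 0 := hx
      have e1 : i (σ ⟨⟨x, l⟩, hx⟩) = l := hσ _
      constructor
      · intro h0
        rw [h0, map_zero] at e1
        subst e1
        rw [map_zero, add_zero] at hx'
        have h2 : g x = 0 := h.inj (hx'.trans (map_zero a).symm)
        obtain ⟨n, rfl⟩ := hs.lift _ h2
        exact ⟨n, rfl⟩
      · rintro ⟨n, hn⟩
        have : l = 0 := (congrArg (fun z => z.1.2) hn).symm
        exact hc.inj ((e1.trans this).trans (map_zero i).symm)
    · intro c'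
      obtain ⟨n0, hn0⟩ := h.lift (φ (i c')) (by rw [hφ', hc.zero])
      obtain ⟨x, rfl⟩ := hs.surj n0
      refine ⟨⟨(-x, i c'), ?_⟩, ?_⟩
      · change a (g (-x)) + φ (i c') = 0
        rw [← hn0]; simp
      · apply hc.inj
        rw [hσ]; rfl

theorem GD.ker {n : ℕ} {a : A →ₗ[R] B} {b : B →ₗ[R] C} (h : SES a b)
    (hB : GD R n (ModuleCat.of R B)) (hC : GF R C) : GD R n (ModuleCat.of R A) := by
  match n with
  | 0 => exact GF.ker h hB hC
  | n + 1 =>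
    obtain ⟨X', G, f, g, hs, hG, hX'⟩ := hB
    let t : G →ₗ[R] C := b ∘ₗ (show G →ₗ[R] B from g)
    have ht : ∀ x, t x = b (g x) := fun x => rfl
    have hts : Function.Surjective t := h.surj.comp hs.surj
    have hY := SES.ker hts
    obtain ⟨σ, hσ⟩ := h.linLift ((show G →ₗ[R] B from g) ∘ₗ (LinearMap.ker t).subtype) (by
      rintro ⟨x, hx⟩; exact hx)
    have hσ' : ∀ y, a (σ y) = g y.1 := hσ
    refine GD.mk (A := X') (f := LinearMap.codRestrict (LinearMap.ker t) f ?_) (g := σ)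
      ⟨?_, ?_, ?_⟩ (GF.ker hY hG hC) hX'
    · intro x
      change b (g (f x)) = 0
      rw [hs.zero, map_zero]
    · intro x y hxy
      exact hs.inj (congrArg Subtype.val hxy)
    · intro y
      constructor
      · intro hy
        have h1 := hσ' y
        rw [hy, map_zero] at h1
        obtain ⟨x, hx⟩ := hs.lift _ h1.symm
        exact ⟨x, Subtype.ext hx⟩
      · rintro ⟨x, rfl⟩
        apply h.inj
        refine (hσ' _).trans (Eq.trans ?_ (map_zero a).symm)
        exact hs.zero x
    · intro x
      obtain ⟨y, hy⟩ := hs.surj (a x)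
      refine ⟨⟨y, ?_⟩, ?_⟩
      · change b (g y) = 0
        rw [hy, h.zero]
      · apply h.inj
        rw [hσ', hy]

theorem GD.syzygy {n : ℕ} {i : A →ₗ[R] B} {π : B →ₗ[R] C} (h : SES i π)
    (hC : GD R (n + 1) (ModuleCat.of R C)) (hB : GF R B) : GD R n (ModuleCat.of R A) := by
  obtain ⟨N, G, f, g, hs, hG, hN⟩ := hC
  let t : (G × B) →ₗ[R] C := (show G →ₗ[R] C from g).coprod (-π)
  have ht : ∀ x l, t (x, l) = 0 ↔ g x = π l := by
    intro x l
    change g x + - π l = 0 ↔ _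
    rw [← sub_eq_add_neg, sub_eq_zero]
  have h1 : GD R n (ModuleCat.of R (LinearMap.ker t)) := by
    refine GD.mid (A := N) (a := LinearMap.codRestrict _ (LinearMap.inl R G B ∘ₗ f) ?_)
      (b := LinearMap.snd R G B ∘ₗ (LinearMap.ker t).subtype) ⟨?_, ?_, ?_⟩ hN hB
    · intro x
      refine (ht _ _).2 ?_
      exact (hs.zero x).trans (map_zero π).symm
    · intro x y hxy
      exact hs.inj (congrArg (fun z => z.1.1) hxy)
    · rintro ⟨⟨x, l⟩, hx⟩
      constructor
      · intro h0
        have h0' : l = 0 := h0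
        subst h0'
        have := (ht _ _).1 hx
        rw [map_zero] at this
        obtain ⟨y, rfl⟩ := hs.lift _ this
        exact ⟨y, rfl⟩
      · rintro ⟨y, hy⟩
        exact (congrArg (fun z => z.1.2) hy).symm
    · intro l
      obtain ⟨x, hx⟩ := hs.surj (π l)
      exact ⟨⟨(x, l), (ht _ _).2 hx⟩, rfl⟩
  refine GD.ker (a := LinearMap.codRestrict (LinearMap.ker t) (LinearMap.inr R G B ∘ₗ i) ?_)
      (b := LinearMap.fst R G B ∘ₗ (LinearMap.ker t).subtype) ⟨?_, ?_, ?_⟩ h1 hG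
  · intro x
    refine (ht _ _).2 ?_
    exact (map_zero g).trans (h.zero x).symm
  · intro x y hxy
    exact h.inj (congrArg (fun z => z.1.2) hxy)
  · rintro ⟨⟨x, l⟩, hx⟩
    constructor
    · intro h0
      have h0' : x = 0 := h0
      subst h0'
      have := (ht _ _).1 hx
      rw [map_zero] at this
      obtain ⟨y, rfl⟩ := h.lift _ this.symm
      exact ⟨y, rfl⟩
    · rintro ⟨y, hy⟩
      exact (congrArg (fun z => z.1.1) hy).symm
  · intro x
    obtain ⟨l, hl⟩ := h.surj (g x)
    exact ⟨⟨(x, l), (ht _ _).2 hl.symm⟩, rfl⟩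

theorem GD.of_witness {n : ℕ} {M : Type u} [AddCommGroup M] [Module R M]
    (W : GfdWitness R M n) : GD R n (ModuleCat.of R M) := by
  induction n generalizing M with
  | zero =>
    let := W.acg
    let := W.mod
    have hinj : Function.Injective W.π := by
      rw [← LinearMap.ker_eq_bot, W.exact_zero, LinearMap.range_eq_bot]
      ext x
      have := W.triv 1 (by omega)
      rw [Subsingleton.elim x 0]; simp
    exact GF.of_equiv (LinearEquiv.ofBijective W.π ⟨hinj, W.π_surj⟩)
      (gf_iff.1 (W.gf 0 le_rfl))
  | succ n ih =>
    let := W.acg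
    let := W.mod
    have hd : ∀ x, W.d 0 x ∈ LinearMap.ker W.π := by
      intro x; rw [W.exact_zero]; exact ⟨x, rfl⟩
    refine GD.mk (SES.ker W.π_surj) (gf_iff.1 (W.gf 0 (by omega))) (ih ?_)
    refine { G := fun i => W.G (i + 1), gf := fun i hi => W.gf _ (by omega),
             triv := fun i hi => W.triv _ (by omega),
             π := LinearMap.codRestrict _ (W.d 0) hd,
             π_surj := ?_, d := fun i => W.d (i + 1), exact_zero := ?_,
             exact := fun i => W.exact (i + 1) }
    · rintro ⟨x, hx⟩
      rw [W.exact_zero] at hx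
      obtain ⟨y, rfl⟩ := hx
      exact ⟨y, rfl⟩
    · rw [LinearMap.ker_codRestrict, W.exact]

theorem GD.witness {n : ℕ} {M : Type u} [AddCommGroup M] [Module R M]
    (h : GD R n (ModuleCat.of R M)) : Nonempty (GfdWitness R M n) := by
  induction n generalizing M with
  | zero =>
    let G : ℕ → ModuleCat.{u} R := fun i => match i with
      | 0 => ModuleCat.of R M
      | _ + 1 => ModuleCat.of R PUnit
    refine ⟨{ G := fun i => G i, gf := ?_, triv := ?_, π := (LinearMap.id : M →ₗ[R] M),
              π_surj := fun x => ⟨x, rfl⟩, d := fun i => 0, exact_zero := ?_, exact := ?_ }⟩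
    · intro i hi
      obtain rfl : i = 0 := by omega
      exact gf_iff.2 h
    · intro i hi
      match i with
      | i + 1 => exact inferInstanceAs (Subsingleton PUnit)
    · rw [LinearMap.range_zero]; exact LinearMap.ker_id
    · intro i
      ext x
      have : Subsingleton (G (i + 1)) := inferInstanceAs (Subsingleton PUnit)
      rw [Subsingleton.elim x 0]
      simp
  | succ n ih =>
    obtain ⟨N, G, f, g, hs, hG, hN⟩ := h
    obtain ⟨W⟩ := ih (M := N) hN
    let := W.acg
    let := W.mod
    let G' : ℕ → ModuleCat.{u} R := fun i => match i with
      | 0 => G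
      | i + 1 => ModuleCat.of R (W.G i)
    let d : ∀ i, G' (i + 1) →ₗ[R] G' i := fun i => match i with
      | 0 => f ∘ₗ W.π
      | i + 1 => W.d i
    refine ⟨{ G := fun i => G' i, gf := ?_, triv := ?_, π := g,
              π_surj := hs.surj, d := d, exact_zero := ?_, exact := ?_ }⟩
    · intro i hi
      match i with
      | 0 => exact gf_iff.2 hG
      | i + 1 => exact W.gf i (by omega)
    · intro i hi
      match i with
      | i + 1 => exact W.triv i (by omega)
    · rw [LinearMap.exact_iff.1 hs.ex]
      symm
      exact LinearMap.range_comp_of_range_eq_top _ (LinearMap.range_eq_top.2 W.π_surj)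
    · intro i
      match i with
      | 0 =>
        refine Eq.trans ?_ W.exact_zero
        exact LinearMap.ker_comp_of_ker_eq_bot _ (LinearMap.ker_eq_bot.2 hs.inj)
      | i + 1 => exact W.exact i

theorem gfd_witness_iff {n : ℕ} {M : Type u} [AddCommGroup M] [Module R M] :
    Nonempty (GfdWitness R M n) ↔ GD R n (ModuleCat.of R M) :=
  ⟨fun ⟨W⟩ => GD.of_witness W, GD.witness⟩

end Dimension

end GFD

namespace GFD

section BaseChange

instance charTower {R Q A : Type u} [CommRing R] [CommRing Q] [Algebra R Q] [AddCommGroup A]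
    [Module R A] [Module Q A] [IsScalarTower R Q A] : IsScalarTower R Q (CharacterModule A) where
  smul_assoc r q c := by
    apply CharacterModule.ext
    intro a
    change c ((r • q) • a) = c (q • r • a)
    rw [smul_assoc, smul_comm]

variable {R : Type u} [CommRing R]

theorem PureD.of_comp {A B C : Type u} [AddCommGroup A] [Module R A] [AddCommGroup B]
    [Module R B] [AddCommGroup C] [Module R C] {f : A →ₗ[R] B} {g : B →ₗ[R] C}
    (h : PureD (g ∘ₗ f)) : PureD f := by
  intro E _ _ hE φ
  obtain ⟨ψ, hψ⟩ := h E hE φ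
  exact ⟨ψ ∘ₗ g, hψ⟩

section

variable (S : Type u) [CommRing S] [Algebra R S] [Module.FaithfullyFlat R S]
variable (A : Type u) [AddCommGroup A] [Module R A]

/-- The unit map to the base change. -/
noncomputable def unit : A →ₗ[R] S ⊗[R] A := TensorProduct.mk R S A 1

theorem unit_injective : Function.Injective (unit (R := R) S A) :=
  Module.FaithfullyFlat.tensorProduct_mk_injective A

theorem unit_pure : PureD (unit (R := R) S A) := by
  rw [pureD_iff']
  intro E _ _ _
  have h1 : (TensorProduct.leftComm R E S A).toLinearMap ∘ₗ (unit (R := R) S A).lTensor E =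
      unit (R := R) S (E ⊗[R] A) := by
    ext; rfl
  have h2 : Function.Injective ((TensorProduct.leftComm R E S A).toLinearMap ∘ₗ
      (unit (R := R) S A).lTensor E) := by
    rw [h1]; exact unit_injective S _
  rw [LinearMap.coe_comp] at h2
  exact Function.Injective.of_comp h2

end

variable (Q S : Type u) [CommRing Q] [CommRing S] [Algebra R Q] [Algebra R S] [Algebra Q S]
  [IsScalarTower R Q S]
variable {A B C : Type u} [AddCommGroup A] [Module R A] [AddCommGroup B]
    [Module R B] [AddCommGroup C] [Module R C]

/-- Base change of maps, `Q`-linear. -/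
noncomputable def bc (f : A →ₗ[R] B) : S ⊗[R] A →ₗ[Q] S ⊗[R] B :=
  TensorProduct.AlgebraTensorModule.lTensor Q S f

theorem bc_tmul (f : A →ₗ[R] B) (s : S) (a : A) : bc Q S f (s ⊗ₜ a) = s ⊗ₜ f a := rfl

theorem bc_eq (f : A →ₗ[R] B) : (bc Q S f : S ⊗[R] A → S ⊗[R] B) = f.lTensor S := rfl

theorem SES.bc [Module.Flat R S] {f : A →ₗ[R] B} {g : B →ₗ[R] C} (h : SES f g) :
    SES (bc Q S f) (bc Q S g) := by
  refine ⟨?_, ?_, ?_⟩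
  · rw [bc_eq]; exact Module.Flat.lTensor_preserves_injective_linearMap f h.inj
  · rw [bc_eq, bc_eq]; exact lTensor_exact S h.ex h.surj
  · rw [bc_eq]; exact LinearMap.lTensor_surjective S h.surj

theorem flat_bc [Module.Flat Q S] (h : Module.Flat R A) : Module.Flat Q (S ⊗[R] A) := by
  have : Module.Flat S (S ⊗[R] A) := inferInstance
  exact Module.Flat.trans Q S (S ⊗[R] A)

/-- The hypothesis that base change preserves purity. -/
def PresPure (R Q S : Type u) [CommRing R] [CommRing Q] [CommRing S] [Algebra R Q]
    [Algebra R S] [Algebra Q S] [IsScalarTower R Q S] : Prop :=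
  ∀ (A B : Type u) [AddCommGroup A] [Module R A] [AddCommGroup B] [Module R B]
    (f : A →ₗ[R] B), PureD f → PureD (bc Q S f)

section Ascent

variable [Module.Flat R S] [Module.Flat Q S]

theorem Step.bc (hpp : PresPure R Q S) (h : Step R A B) : Step Q (S ⊗[R] A) (S ⊗[R] B) := by
  obtain ⟨F, f, g, hF, hs, hp⟩ := h
  exact ⟨ModuleCat.of Q (S ⊗[R] F), GFD.bc Q S f, GFD.bc Q S g, flat_bc Q S hF, hs.bc Q S,
    hpp _ _ _ hp⟩

theorem GF.bc (hpp : PresPure R Q S) (h : GF R A) : GF Q (S ⊗[R] A) := by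
  constructor
  · refine TV.of_coind (fun X => ∃ K : ModuleCat.{u} R, TV R K ∧ X = ModuleCat.of Q (S ⊗[R] K))
      ?_ ⟨ModuleCat.of R A, h.1, rfl⟩
    rintro _ ⟨K, hK, rfl⟩
    obtain ⟨K', hK', hs⟩ := hK.unfold
    exact ⟨_, ⟨K', hK', rfl⟩, hs.bc Q S hpp⟩
  · refine ⟨fun X => ∃ K : ModuleCat.{u} R, WRC R K ∧ X = ModuleCat.of Q (S ⊗[R] K),
      ⟨ModuleCat.of R A, h.2, rfl⟩, ?_⟩
    rintro _ ⟨K, hK, rfl⟩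
    obtain ⟨K', hK', hs⟩ := hK.unfold
    exact ⟨_, ⟨K', hK', rfl⟩, hs.bc Q S hpp⟩

theorem GD.bc (hpp : PresPure R Q S) {n : ℕ} {M : ModuleCat.{u} R} (h : GD R n M) :
    GD Q n (ModuleCat.of Q (S ⊗[R] M)) := by
  induction n generalizing M with
  | zero => exact GF.bc Q S hpp h
  | succ n ih =>
    obtain ⟨N, G, f, g, hs, hG, hN⟩ := h
    exact GD.mk (hs.bc Q S) (hG.bc Q S hpp) (ih hN)

end Ascent

section Descent

variable [Module.FaithfullyFlat R S] [Module.Flat Q S] [IsNoetherianRing R]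

theorem pure_descent {X : Type u} [AddCommGroup X] [Module R X] [Module Q X] [IsScalarTower R Q X]
    (v : S ⊗[R] A →ₗ[Q] X) (hv : PureD v) : PureD (v.restrictScalars R ∘ₗ unit (R := R) S A) := by
  intro E _ _ hE φ
  have hD : Module.Flat R (CharacterModule E) := flat_dual hE
  have hSD : Module.Flat Q (S ⊗[R] CharacterModule E) := flat_bc Q S hD
  have hJ : Module.Injective Q (CharacterModule (S ⊗[R] CharacterModule E)) := flat_iff.1 hSD
  obtain ⟨ρ, hρ⟩ := unit_pure (R := R) S (CharacterModule E) E hE LinearMap.id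
  obtain ⟨r, hr⟩ := pureD_ev (R := R) (A := S ⊗[R] CharacterModule E) E hE ρ
  obtain ⟨ψ, hψ⟩ := hv _ hJ (ev Q (S ⊗[R] CharacterModule E) ∘ₗ bc Q S φ)
  refine ⟨r ∘ₗ ψ.restrictScalars R, ?_⟩
  ext1 a
  have e1 : ψ (v (1 ⊗ₜ a)) = ev R (S ⊗[R] CharacterModule E) (1 ⊗ₜ φ a) :=
    LinearMap.congr_fun hψ (1 ⊗ₜ a)
  have e2 : r (ev R (S ⊗[R] CharacterModule E) (1 ⊗ₜ φ a)) = ρ (1 ⊗ₜ φ a) :=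
    LinearMap.congr_fun hr _
  have e3 : ρ (1 ⊗ₜ φ a) = φ a := LinearMap.congr_fun hρ (φ a)
  change r (ψ (v (1 ⊗ₜ a))) = φ a
  rw [e1, e2, e3]

theorem pure_of_bc {f : A →ₗ[R] B} (h : PureD (bc Q S f)) : PureD f := by
  have h1 := pure_descent Q S _ h
  exact PureD.of_comp (g := unit (R := R) S B) h1

theorem TV.descent (h : TV Q (S ⊗[R] A)) : TV R A := by
  refine TV.of_coind (fun X : ModuleCat.{u} R => TV Q (S ⊗[R] X)) ?_ h
  intro X hX
  obtain ⟨L, K, f, g, hL, hs⟩ := exists_cover (R := R) X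
  have hF : Module.Flat R L := inferInstance
  have hL' : TV Q (S ⊗[R] L) := TV.of_flat (flat_bc Q S hF)
  have hs' := hs.bc Q S
  exact ⟨K, hL'.ker hs' hX, L, f, g, hF, hs, pure_of_bc Q S (hX.pure hs')⟩

variable [IsNoetherianRing Q] [Module.Flat R Q]

theorem GF.descent (hpp : PresPure R Q S) (h : GF Q (S ⊗[R] A)) : GF R A := by
  refine ⟨h.1.descent Q S, fun X : ModuleCat.{u} R => GF Q (S ⊗[R] X), h, ?_⟩
  intro X hX
  obtain ⟨C', -, F, u, v, hF, hs, hp⟩ := hX.2.unfold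
  let : Module R F := Module.compHom F (algebraMap R Q)
  have : IsScalarTower R Q F := IsScalarTower.of_algebraMap_smul fun r x => rfl
  have hFR : Module.Flat R F := Module.Flat.trans R Q F
  have hw := pure_descent Q S u hp
  have hi : Function.Injective (u.restrictScalars R ∘ₗ unit (R := R) S X) :=
    hs.inj.comp (unit_injective S X)
  have hc := SES.coker hi
  refine ⟨ModuleCat.of R _, ?_, ModuleCat.of R F, _, _, hFR, hc, hw⟩
  exact GF.coker (hc.bc Q S) (hpp _ _ _ hw) hX (flat_bc Q S hFR)

theorem GD.descent (hpp : PresPure R Q S) {n : ℕ} {M : ModuleCat.{u} R} (h : GD Q n (ModuleCat.of Q (S ⊗[R] M))) :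
    GD R n M := by
  induction n generalizing M with
  | zero => exact GF.descent Q S hpp h
  | succ n ih =>
    obtain ⟨L, K, f, g, hL, hs⟩ := exists_cover (R := R) M
    have hF : Module.Flat R L := inferInstance
    exact GD.mk hs (GF.of_flat hF) (ih (GD.syzygy (hs.bc Q S) h (GF.of_flat (flat_bc Q S hF))))

end Descent

theorem presPure_self [Module.Flat R S] : PresPure R R S := by
  intro A B _ _ _ _ f hf
  rw [pureD_iff'] at hf ⊢
  intro E _ _ hE
  have h1 : (TensorProduct.leftComm R E S B).toLinearMap ∘ₗ (bc R S f).lTensor E =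
      (f.lTensor E).lTensor S ∘ₗ (TensorProduct.leftComm R E S A).toLinearMap := by
    ext; rfl
  have h2 : Function.Injective ((TensorProduct.leftComm R E S B).toLinearMap ∘ₗ
      (bc R S f).lTensor E) := by
    rw [h1]
    exact (Module.Flat.lTensor_preserves_injective_linearMap _ (hf E hE)).comp
      (TensorProduct.leftComm R E S A).injective
  rw [LinearMap.coe_comp] at h2
  exact Function.Injective.of_comp h2

theorem injective_restrict [Module.Flat R S] {J : Type u} [AddCommGroup J] [Module R J]
    [Module S J] [IsScalarTower R S J] (hJ : Module.Injective S J) : Module.Injective R J := by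
  refine ⟨fun X Y _ _ _ _ f hf g => ?_⟩
  obtain ⟨k, hk⟩ := hJ.out (bc S S f)
    (by rw [bc_eq]; exact Module.Flat.lTensor_preserves_injective_linearMap f hf)
    (g.liftBaseChange S)
  refine ⟨k.restrictScalars R ∘ₗ TensorProduct.mk R S Y 1, fun x => ?_⟩
  have := hk (1 ⊗ₜ x)
  rw [LinearMap.liftBaseChange_tmul, one_smul] at this
  exact this

theorem presPure_top [Module.Flat R S] : PresPure R S S := by
  intro A B _ _ _ _ f hf J _ _ hJ φ
  let : Module R J := Module.compHom J (algebraMap R S)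
  have : IsScalarTower R S J := IsScalarTower.of_algebraMap_smul fun r x => rfl
  obtain ⟨ψ, hψ⟩ := hf J (injective_restrict S hJ)
    (φ.restrictScalars R ∘ₗ TensorProduct.mk R S A 1)
  refine ⟨ψ.liftBaseChange S, ?_⟩
  apply TensorProduct.AlgebraTensorModule.ext
  intro s a
  have h1 : ψ (f a) = φ (1 ⊗ₜ a) := LinearMap.congr_fun hψ a
  rw [LinearMap.comp_apply, bc_tmul, LinearMap.liftBaseChange_tmul, h1, ← map_smul,
    TensorProduct.smul_tmul', smul_eq_mul, mul_one]

end BaseChange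

end GFD

namespace GFD

theorem gfd_congr {R Q M N : Type u} [CommRing R] [CommRing Q] [IsNoetherianRing R]
    [IsNoetherianRing Q] [AddCommGroup M] [Module R M] [AddCommGroup N] [Module Q N]
    (h : ∀ n, GD R n (ModuleCat.of R M) ↔ GD Q n (ModuleCat.of Q N)) : gfd R M = gfd Q N := by
  unfold gfd
  congr 1
  ext c
  simp only [Set.mem_ofPred_eq, gfd_witness_iff, h]

end GFD

theorem gfd_baseChange_eq_of_faithfullyFlat_of_semilocal
    (R S : Type u) [CommRing R] [CommRing S] [IsNoetherianRing R] [IsNoetherianRing S]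
    [Algebra R S] [Module.FaithfullyFlat R S]
    (hsemilocal : {I : Ideal R | I.IsMaximal}.Finite)
    (M : Type u) [AddCommGroup M] [Module R M] :
    gfd S (S ⊗[R] M) = gfd R (S ⊗[R] M) ∧ gfd R (S ⊗[R] M) = gfd R M := by
  have h1 : gfd R M = gfd R (S ⊗[R] M) := GFD.gfd_congr fun n =>
    ⟨fun h => GFD.GD.bc R S (GFD.presPure_self S) h,
      fun h => GFD.GD.descent (M := ModuleCat.of R M) R S (GFD.presPure_self S) h⟩
  have h2 : gfd R M = gfd S (S ⊗[R] M) := GFD.gfd_congr fun n =>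
    ⟨fun h => GFD.GD.bc S S (GFD.presPure_top S) h,
      fun h => GFD.GD.descent (M := ModuleCat.of R M) S S (GFD.presPure_top S) h⟩
  exact ⟨h2.symm.trans h1, h1.symm⟩
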